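/- Define $u(z) = \left| \exp\left( \frac{z+1}{z-1} \right) \right|$ for $z$ in the unit disk $\mathbb{B}^2 \subset \mathbb{C}$, which is the distance of $f(z) = \exp((z+1)/(z-1))$ to the boundary of the punctured disk $\mathbb{B}^2 \setminus \{0\}$. Then for every $s$ with $1 - 1/e \leq s < 1$ and every constant $C \geq 1$, the function $u$ does NOT satisfy the $(s, C)$-Harnack inequality in $\mathbb{B}^2$: indeed, for $x_p = \frac{e^p-1}{e^p+1}$ with $p \in \mathbb{N}$, the point $x_{p+1}$ lies in the closed ball $\overline{B}^2(x_p, s(1-x_p))$, while $\frac{u(x_p)}{u(x_{p+1})} = \exp(e^{p+1} - e^p) \to \infty$ as $p \to \infty$. -/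

import Mathlib

open Metric Set Filter

/-- A continuous function `u : G → [0,∞)` on a plane domain `G ⊊ ℝ² ≅ ℂ` satisfies the
`(s, C)`-Harnack inequality in `G` if for every `x ∈ G` and every `r > 0` with
`B(x,r) ⊆ G`, one has `u z₁ ≤ C * u z₂` for all `z₁, z₂` in the closed ball `B̄(x, s r)`. -/
def SatisfiesHarnack (u : ℂ → ℝ) (G : Set ℂ) (s C : ℝ) : Prop :=
  ∀ x ∈ G, ∀ r > (0 : ℝ), ball x r ⊆ G →
    ∀ z₁ ∈ closedBall x (s * r), ∀ z₂ ∈ closedBall x (s * r), u z₁ ≤ C * u z₂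

/-- `u(z) = |exp((z+1)/(z-1))|`, the distance of `f(z) = exp((z+1)/(z-1))` to the boundary
of the punctured disk `𝔹² ∖ {0}`. -/
noncomputable def uSlit (z : ℂ) : ℝ := ‖Complex.exp ((z + 1) / (z - 1))‖

/-- The points `x_p = (eᵖ-1)/(eᵖ+1)` on the radius `(0,1)`. -/
noncomputable def xp (p : ℕ) : ℝ := (Real.exp p - 1) / (Real.exp p + 1)

lemma xp_eq (p : ℕ) : 1 - xp p = 2 / (Real.exp p + 1) := by
  have := Real.exp_pos p
  unfold xp
  field_simp
  ring

lemma uSlit_xp (p : ℕ) : uSlit (xp p) = Real.exp (-Real.exp p) := by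
  have h0 := Real.exp_pos p
  have h : ((xp p : ℝ) + 1 : ℝ) / (xp p - 1) = -Real.exp p := by
    have h1 : xp p - 1 = -(2 / (Real.exp p + 1)) := by rw [← xp_eq]; ring
    have h2 : xp p + 1 = 2 - 2 / (Real.exp p + 1) := by rw [← xp_eq]; ring
    rw [h1, h2]
    field_simp
    ring
  have h' : ((xp p : ℂ) + 1) / ((xp p : ℂ) - 1) = ((-Real.exp p : ℝ) : ℂ) := by
    rw [← h]; push_cast; rfl
  unfold uSlit
  rw [h', Complex.norm_exp, Complex.ofReal_re]

lemma xp_mem (s : ℝ) (hs₁ : 1 - 1 / Real.exp 1 ≤ s) (p : ℕ) :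
    ((xp (p + 1) : ℝ) : ℂ) ∈ closedBall ((xp p : ℝ) : ℂ) (s * (1 - xp p)) := by
  have hE := Real.exp_pos p
  have he : 1 < Real.exp 1 := Real.one_lt_exp_iff.2 one_pos
  have hx : Real.exp ((p + 1 : ℕ) : ℝ) = Real.exp p * Real.exp 1 := by
    push_cast; exact Real.exp_add _ _
  have hd : xp (p + 1) - xp p = 2 / (Real.exp p + 1) - 2 / (Real.exp p * Real.exp 1 + 1) := by
    rw [← hx, ← xp_eq, ← xp_eq]; ring
  rw [mem_closedBall, dist_eq_norm, ← Complex.ofReal_sub, Complex.norm_real, Real.norm_eq_abs,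
    hd, xp_eq]
  generalize Real.exp p = E at *
  generalize Real.exp 1 = e at *
  have hpos : 0 < e := by linarith
  rw [abs_of_nonneg]
  · refine le_trans ?_ (mul_le_mul_of_nonneg_right hs₁ (by positivity))
    have : 2 / (E * e + 1) ≥ 1 / e * (2 / (E + 1)) := by
      rw [ge_iff_le, div_mul_div_comm, div_le_div_iff₀ (by positivity) (by positivity)]
      nlinarith
    linarith
  · rw [sub_nonneg]
    apply div_le_div_of_nonneg_left <;> nlinarith

lemma ratio_eq (p : ℕ) : uSlit (xp p) / uSlit (xp (p + 1)) =
      Real.exp (Real.exp (p + 1) - Real.exp p) := by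
  rw [uSlit_xp, uSlit_xp, ← Real.exp_sub]
  push_cast
  ring_nf

lemma ratio_tendsto :
    Tendsto (fun p : ℕ => uSlit (xp p) / uSlit (xp (p + 1))) atTop atTop := by
  simp_rw [ratio_eq]
  refine Real.tendsto_exp_atTop.comp ?_
  refine tendsto_atTop_mono (fun p : ℕ => ?_) tendsto_natCast_atTop_atTop
  rw [Real.exp_add]
  have h1 := Real.add_one_le_exp (p : ℝ)
  have h2 := Real.add_one_le_exp (1 : ℝ)
  nlinarith [Real.exp_pos p]

/-- For every `s` with `1 - 1/e ≤ s < 1` and every `C ≥ 1`, the function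
`u(z) = |exp((z+1)/(z-1))|` does NOT satisfy the `(s, C)`-Harnack inequality in `𝔹²`:
indeed `x_{p+1} ∈ B̄(x_p, s(1-x_p))` for all `p ∈ ℕ`, while
`u(x_p)/u(x_{p+1}) = exp(e^{p+1}-eᵖ) → ∞` as `p → ∞`. -/
theorem stmt_16 (s C : ℝ) (hs₁ : 1 - 1 / Real.exp 1 ≤ s) (hs₂ : s < 1) (hC : 1 ≤ C) :
    ¬ SatisfiesHarnack uSlit (ball (0 : ℂ) 1) s C ∧
    (∀ p : ℕ, ((xp (p + 1) : ℝ) : ℂ) ∈ closedBall ((xp p : ℝ) : ℂ) (s * (1 - xp p))) ∧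
    (∀ p : ℕ, uSlit (xp p) / uSlit (xp (p + 1)) =
      Real.exp (Real.exp (p + 1) - Real.exp p)) ∧
    Tendsto (fun p : ℕ => uSlit (xp p) / uSlit (xp (p + 1))) atTop atTop := by
  refine ⟨fun H => ?_, xp_mem s hs₁, ratio_eq, ratio_tendsto⟩
  obtain ⟨p, hp⟩ := (ratio_tendsto.eventually_gt_atTop C).exists
  have hE : 1 ≤ Real.exp p := Real.one_le_exp (by positivity)
  have h1 : 0 < 1 - xp p := by rw [xp_eq]; positivity
  have h0 : 0 ≤ xp p := by unfold xp; apply div_nonneg <;> linarith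
  have hs : 0 ≤ s := by
    refine le_trans ?_ hs₁
    rw [sub_nonneg, div_le_one (Real.exp_pos 1)]
    exact Real.one_le_exp zero_le_one
  have hn : ‖(xp p : ℂ)‖ = xp p := by
    rw [Complex.norm_real, Real.norm_eq_abs, abs_of_nonneg h0]
  have := H (xp p) (by rw [mem_ball_zero_iff, hn]; linarith) (1 - xp p) h1
    (ball_subset_ball' (by rw [dist_zero_right, hn]; linarith))
    (xp p) (mem_closedBall_self (by positivity)) _ (xp_mem s hs₁ p)
  have hu : 0 < uSlit (xp (p + 1)) := by rw [uSlit_xp]; positivity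
  rw [lt_div_iff₀ hu] at hp
  linarith
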